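/- Assume q ≤ 1/2, q + 2λ ≤ 1, λ > 0, and 0 < q. For any two templates G^(1), G^(2), any node matching M ∈ M*, and any pair of labelings (π^(1),π^(2)) ∈ Π(M): | E[P_{G^(1),π^(1)}·P_{G^(2),π^(2)}] / √( E[P_{G^(1),π^(1)}²]·E[P_{G^(2),π^(2)}²] ) | ≤ min( K^{−(|U^(1)|+|U^(2)|)}·(λ/√q̄)^{|E_Δ|} , λ^{|E_Δ|/2} / K^{(|U^(1)|+|U^(2)|)/2} ). -/

import Mathlib

/-! Given the labels `z`, the entries `Y_p` are independent with mean `λ 1{z constant on p}`. With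
`S₁`, `S₂` the edge sets of the two labeled graphs, this turns the joint moment into
`λ^|E_Δ| · E[1{z constant along E_Δ} ∏_{p ∈ S₁ ∩ S₂} E[Y_p² | z]]`. Any path from a private node of
one graph to its first shared node uses unmatched edges only, so constancy along these edges fixes
the labels of the private nodes given the others: each private node costs a factor `K`. On the other
side, `E[Y_p² | z]` dominates both `q(1 - q)` and, because `q + 2λ ≤ 1`, also
`λ 1{z constant on p}`. The two terms of the minimum come from bounding the second moments below
with the first, respectively the second, of these estimates on the unmatched edges. -/

open Classical Finset

noncomputable section

namespace SBM

/-- Index type for the edge slots of a graph on `n` nodes: ordered pairs `i < j`. -/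
abbrev Pairs (n : ℕ) := {p : Fin n × Fin n // p.1 < p.2}

/-- A configuration of edges: one Boolean per pair `i < j`. -/
abbrev EdgeConf (n : ℕ) := Pairs n → Bool

/-- Community labels of the `n` nodes, with `K` communities. -/
abbrev Lab (n K : ℕ) := Fin n → Fin K

/-- The recentered symmetric adjacency entries `Y i j = Y*_{ij} - q` (and `0` on the diagonal). -/
def Ymat (n : ℕ) (q : ℝ) (y : EdgeConf n) (i j : Fin n) : ℝ :=
  if h : i = j then 0
  else (if y ⟨(min i j, max i j), min_lt_max.mpr h⟩ then 1 else 0) - q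

/-- Conditional connection probability of a pair given the labels. -/
def pEdge (n K : ℕ) (q lam : ℝ) (z : Lab n K) (p : Pairs n) : ℝ :=
  if z p.1.1 = z p.1.2 then q + lam else q

/-- SBM probability weight of a configuration `(z, y)`: labels are i.i.d. uniform on `Fin K`
and, conditionally on `z`, edges are independent Bernoulli. -/
def wt (n K : ℕ) (q lam : ℝ) (z : Lab n K) (y : EdgeConf n) : ℝ :=
  ((K : ℝ)⁻¹) ^ n *
    ∏ p : Pairs n, (if y p then pEdge n K q lam z p else 1 - pEdge n K q lam z p)

/-- Expectation under the SBM. -/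
def expec (n K : ℕ) (q lam : ℝ) (F : Lab n K → EdgeConf n → ℝ) : ℝ :=
  ∑ z : Lab n K, ∑ y : EdgeConf n, wt n K q lam z y * F z y

/-- Expectation conditionally on `z i = z j`. -/
def expecEq (n K : ℕ) (q lam : ℝ) (i j : Fin n) (F : Lab n K → EdgeConf n → ℝ) : ℝ :=
  expec n K q lam (fun z y => if z i = z j then F z y else 0) /
    expec n K q lam (fun z _ => if z i = z j then 1 else 0)

/-- Expectation conditionally on `z i ≠ z j`. -/
def expecNe (n K : ℕ) (q lam : ℝ) (i j : Fin n) (F : Lab n K → EdgeConf n → ℝ) : ℝ :=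
  expec n K q lam (fun z y => if z i ≠ z j then F z y else 0) /
    expec n K q lam (fun z _ => if z i ≠ z j then 1 else 0)

/-- Variance conditionally on `z i = z j`. -/
def varEq (n K : ℕ) (q lam : ℝ) (i j : Fin n) (F : Lab n K → EdgeConf n → ℝ) : ℝ :=
  expecEq n K q lam i j (fun z y => F z y ^ 2) - expecEq n K q lam i j F ^ 2

/-- Variance conditionally on `z i ≠ z j`. -/
def varNe (n K : ℕ) (q lam : ℝ) (i j : Fin n) (F : Lab n K → EdgeConf n → ℝ) : ℝ :=
  expecNe n K q lam i j (fun z y => F z y ^ 2) - expecNe n K q lam i j F ^ 2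

/-- The (centered) membership indicator `x = 1{z i0 = z i1} - 1/K`. -/
def xind (n K : ℕ) (i0 i1 : Fin n) (z : Lab n K) : ℝ :=
  (if z i0 = z i1 then 1 else 0) - 1 / K

/-- A template: a finite simple graph on `Fin v` (edges stored as ordered pairs `a < b`)
with the two distinguished nodes `0` and `1`. -/
structure Template where
  v : ℕ
  hv : 2 ≤ v
  E : Finset (Fin v × Fin v)
  hE : ∀ e ∈ E, e.1 < e.2

namespace Template

/-- First distinguished node. -/
def v1 (T : Template) : Fin T.v := ⟨0, by have := T.hv; omega⟩

/-- Second distinguished node. -/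
def v2 (T : Template) : Fin T.v := ⟨1, by have := T.hv; omega⟩

/-- The underlying simple graph of a template. -/
def graph (T : Template) : SimpleGraph (Fin T.v) :=
  SimpleGraph.fromRel fun a b => (a, b) ∈ T.E

end Template

/-- Labelings `Π_V`: injections sending the distinguished nodes to the nodes `0` and `1`. -/
def PiV (n : ℕ) (hn : 2 ≤ n) (T : Template) : Finset (Fin T.v ↪ Fin n) :=
  Finset.univ.filter fun π =>
    π T.v1 = (⟨0, by omega⟩ : Fin n) ∧ π T.v2 = (⟨1, by omega⟩ : Fin n)

/-- The monomial `P_{G,π}(Y) = ∏_{(u,w) ∈ E} Y_{π u, π w}`. -/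
def PG (n : ℕ) (q : ℝ) (T : Template) (π : Fin T.v ↪ Fin n) (y : EdgeConf n) : ℝ :=
  ∏ e ∈ T.E, Ymat n q y (π e.1) (π e.2)

/-- A matching between the node sets of two templates: no node appears twice. -/
def IsMatching (T1 T2 : Template) (M : Finset (Fin T1.v × Fin T2.v)) : Prop :=
  (∀ p ∈ M, ∀ p' ∈ M, (p : Fin T1.v × Fin T2.v).1 = (p' : Fin T1.v × Fin T2.v).1 → p = p') ∧
  (∀ p ∈ M, ∀ p' ∈ M, (p : Fin T1.v × Fin T2.v).2 = (p' : Fin T1.v × Fin T2.v).2 → p = p')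

/-- `Π(M)`: pairs of labelings compatible with the matching `M`. -/
def PiM (n : ℕ) (hn : 2 ≤ n) (T1 T2 : Template) (M : Finset (Fin T1.v × Fin T2.v)) :
    Set ((Fin T1.v ↪ Fin n) × (Fin T2.v ↪ Fin n)) :=
  {pp | pp.1 ∈ PiV n hn T1 ∧ pp.2 ∈ PiV n hn T2 ∧
    ∀ (a : Fin T1.v) (b : Fin T2.v), pp.1 a = pp.2 b ↔ (a, b) ∈ M}

/-- An edge of `T1` is matched if its two endpoints are matched to the endpoints of an
edge of `T2`. -/
def EdgeMatched1 (T1 T2 : Template) (M : Finset (Fin T1.v × Fin T2.v))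
    (e : Fin T1.v × Fin T1.v) : Prop :=
  ∃ e' ∈ T2.E, ((e.1, e'.1) ∈ M ∧ (e.2, e'.2) ∈ M) ∨ ((e.1, e'.2) ∈ M ∧ (e.2, e'.1) ∈ M)

/-- An edge of `T2` is matched if its two endpoints are matched to the endpoints of an
edge of `T1`. -/
def EdgeMatched2 (T1 T2 : Template) (M : Finset (Fin T1.v × Fin T2.v))
    (e' : Fin T2.v × Fin T2.v) : Prop :=
  ∃ e ∈ T1.E, ((e.1, e'.1) ∈ M ∧ (e.2, e'.2) ∈ M) ∨ ((e.1, e'.2) ∈ M ∧ (e.2, e'.1) ∈ M)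

/-- `|E_Δ|`: the number of unmatched edges (in either template). -/
def EDeltaCard (T1 T2 : Template) (M : Finset (Fin T1.v × Fin T2.v)) : ℕ :=
  (T1.E.filter fun e => ¬ EdgeMatched1 T1 T2 M e).card +
    (T2.E.filter fun e => ¬ EdgeMatched2 T1 T2 M e).card

/-- `|U^{(1)}|`: the number of unmatched nodes of the first template. -/
def U1card (T1 T2 : Template) (M : Finset (Fin T1.v × Fin T2.v)) : ℕ :=
  (Finset.univ.filter fun a : Fin T1.v => ∀ p ∈ M, (p : Fin T1.v × Fin T2.v).1 ≠ a).card

/-- `|U^{(2)}|`: the number of unmatched nodes of the second template. -/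
def U2card (T1 T2 : Template) (M : Finset (Fin T1.v × Fin T2.v)) : ℕ :=
  (Finset.univ.filter fun b : Fin T2.v => ∀ p ∈ M, (p : Fin T1.v × Fin T2.v).2 ≠ b).card

/-- A pair of matched nodes is semi-matched if one of them is incident to an unmatched edge. -/
def IsSemiMatched (T1 T2 : Template) (M : Finset (Fin T1.v × Fin T2.v))
    (p : Fin T1.v × Fin T2.v) : Prop :=
  (∃ e ∈ T1.E, (e.1 = p.1 ∨ e.2 = p.1) ∧ ¬ EdgeMatched1 T1 T2 M e) ∨
  (∃ e' ∈ T2.E, (e'.1 = p.2 ∨ e'.2 = p.2) ∧ ¬ EdgeMatched2 T1 T2 M e')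

/-- `M_SM`: the semi-matched pairs of `M`. -/
def MSM (T1 T2 : Template) (M : Finset (Fin T1.v × Fin T2.v)) :
    Finset (Fin T1.v × Fin T2.v) :=
  M.filter (IsSemiMatched T1 T2 M)

/-- `M_PM`: the perfectly matched pairs of `M`. -/
def MPM (T1 T2 : Template) (M : Finset (Fin T1.v × Fin T2.v)) :
    Finset (Fin T1.v × Fin T2.v) :=
  M.filter fun p => ¬ IsSemiMatched T1 T2 M p

/-- A node is isolated if it is incident to no edge. -/
def IsIsolated (T : Template) (w : Fin T.v) : Prop :=
  ∀ e ∈ T.E, e.1 ≠ w ∧ e.2 ≠ w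

/-- The pruned matching `M⁻`: remove the pair of first (resp. second) distinguished nodes
whenever that node is isolated in `T1` or in `T2`. -/
def Mminus (T1 T2 : Template) (M : Finset (Fin T1.v × Fin T2.v)) :
    Finset (Fin T1.v × Fin T2.v) :=
  M.filter fun p =>
    ¬ ((p = (T1.v1, T2.v1) ∧ (IsIsolated T1 T1.v1 ∨ IsIsolated T2 T2.v1)) ∨
       (p = (T1.v2, T2.v2) ∧ (IsIsolated T1 T1.v2 ∨ IsIsolated T2 T2.v2)))

/-- `M ∈ M*`: every connected component of `T1` and of `T2` meets the pruned matching. -/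
def InMstar (T1 T2 : Template) (M : Finset (Fin T1.v × Fin T2.v)) : Prop :=
  (∀ w : Fin T1.v, ∃ p ∈ Mminus T1 T2 M, T1.graph.Reachable w p.1) ∧
  (∀ w : Fin T2.v, ∃ p ∈ Mminus T1 T2 M, T2.graph.Reachable w p.2)

open scoped BigOperators symmDiff

section SumsAndProducts

variable {β ι α R : Type*}

lemma sum_le_one_of_support_subsingleton [Fintype β] [Semiring R] [PartialOrder R]
    [IsOrderedRing R] {B : β → R} (hB : ∀ u, B u ≤ 1) (hsupp : (Function.support B).Subsingleton) :
    ∑ u, B u ≤ 1 := by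
  rcases hsupp.eq_empty_or_singleton with hempty | ⟨u, hu⟩
  · simp [Function.support_eq_empty_iff.mp hempty]
  · rw [Fintype.sum_eq_single u fun v hv => by_contra fun hBv => hv (hu.subset hBv)]
    exact hB u

lemma sum_mul_mul_card_le_sum [Fintype β] [CommSemiring R] [PartialOrder R] [IsOrderedRing R]
    {F B : β → R} (hF : ∀ u, 0 ≤ F u) (hconst : ∀ u v, F u = F v) (hB : ∀ u, B u ≤ 1)
    (hsupp : (Function.support B).Subsingleton) :
    (∑ u, B u * F u) * Fintype.card β ≤ ∑ u, F u :=
  calc (∑ u, B u * F u) * Fintype.card β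
      = ∑ v, (∑ u, B u) * F v := by
        rw [← Finset.card_univ, mul_comm, ← nsmul_eq_mul, ← Finset.sum_const]
        refine Finset.sum_congr rfl fun v _ => ?_
        rw [Finset.sum_mul]
        exact Finset.sum_congr rfl fun u _ => by rw [hconst u v]
    _ ≤ ∑ v, F v := Finset.sum_le_sum fun v _ =>
        mul_le_of_le_one_left (hF v) (sum_le_one_of_support_subsingleton hB hsupp)

lemma sum_mul_mul_card_pow_le_sum [Fintype ι] [DecidableEq ι] [Fintype α] [CommSemiring R]
    [PartialOrder R] [IsOrderedRing R] {D : Finset ι} {F B : (ι → α) → R} (hF : ∀ z, 0 ≤ F z)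
    (hdep : DependsOn F (D : Set ι)ᶜ) (hB : ∀ z, B z ≤ 1)
    (hinj : Set.InjOn (Set.domRestrict (D : Set ι)ᶜ) (Function.support B)) :
    (∑ z, B z * F z) * (Fintype.card α : R) ^ #D ≤ ∑ z, F z := by
  let glue := (Equiv.piEquivPiSubtypeProd (· ∈ D) fun _ : ι => α).symm
  have glue_off : ∀ u u' v, ∀ i ∈ (D : Set ι)ᶜ, glue (u, v) i = glue (u', v) i := by
    intro u u' v i hi
    simp only [Set.mem_compl_iff, Finset.mem_coe] at hi
    simp [glue, Equiv.piEquivPiSubtypeProd, hi]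
  have hcard : Fintype.card ({i // i ∈ D} → α) = Fintype.card α ^ #D := by simp
  rw [← glue.sum_comp, ← glue.sum_comp, Fintype.sum_prod_type_right,
    Fintype.sum_prod_type_right, Finset.sum_mul, ← Nat.cast_pow, ← hcard]
  refine Finset.sum_le_sum fun v _ => sum_mul_mul_card_le_sum (fun u => hF _)
    (fun u u' => hdep (glue_off u u' v)) (fun u => hB _) fun u hu u' hu' => ?_
  have hglue : glue (u, v) = glue (u', v) :=
    hinj hu hu' (funext fun i => glue_off u u' v i i.2)
  exact congrArg Prod.fst (glue.injective hglue)

lemma expect_mul_mul_card_pow_le_expect [Fintype ι] [DecidableEq ι] [Fintype α] [Field R]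
    [LinearOrder R] [IsStrictOrderedRing R] {D : Finset ι} {F B : (ι → α) → R} (hF : ∀ z, 0 ≤ F z)
    (hdep : DependsOn F (D : Set ι)ᶜ) (hB : ∀ z, B z ≤ 1)
    (hinj : Set.InjOn (Set.domRestrict (D : Set ι)ᶜ) (Function.support B)) :
    (𝔼 z, B z * F z) * (Fintype.card α : R) ^ #D ≤ 𝔼 z, F z := by
  rw [Fintype.expect_eq_sum_div_card, Fintype.expect_eq_sum_div_card, div_mul_eq_mul_div]
  gcongr
  exact sum_mul_mul_card_pow_le_sum hF hdep hB hinj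

lemma prod_sdiff_mul_prod_inter_le_prod [DecidableEq β] [CommSemiring R] [PartialOrder R]
    [IsOrderedRing R] {S S' : Finset β} {g w : β → R} (hg : ∀ p, 0 ≤ g p) (hgw : ∀ p, g p ≤ w p) :
    (∏ p ∈ S \ S', g p) * ∏ p ∈ S ∩ S', w p ≤ ∏ p ∈ S, w p := by
  rw [← Finset.prod_inter_mul_prod_sdiff S S' w, mul_comm (∏ p ∈ S ∩ S', w p)]
  have hw : ∀ p, 0 ≤ w p := fun p => (hg p).trans (hgw p)
  exact mul_le_mul_of_nonneg_right (Finset.prod_le_prod (fun p _ => hg p) fun p _ => hgw p)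
    (Finset.prod_nonneg fun p _ => hw p)

lemma card_symmDiff_eq [DecidableEq β] (S S' : Finset β) :
    #(S ∆ S') = #(S \ S') + #(S' \ S) :=
  Finset.card_union_of_disjoint disjoint_sdiff_sdiff

lemma abs_div_sqrt_le {x y t : ℝ} (ht : 0 ≤ t) (h : x ^ 2 ≤ t ^ 2 * y) : |x / √y| ≤ t := by
  rw [abs_div, abs_of_nonneg (Real.sqrt_nonneg y)]
  refine div_le_of_le_mul₀ (Real.sqrt_nonneg y) ht ?_
  rw [← Real.sqrt_sq ht, ← Real.sqrt_mul (sq_nonneg t)]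
  exact Real.abs_le_sqrt h

end SumsAndProducts

section LabelAverages

variable {n K : ℕ} {q lam : ℝ}

/-- The recentered value `1{b} - q` of an edge indicator `b`. -/
def centered (q : ℝ) (b : Bool) : ℝ := (if b then 1 else 0) - q

/-- The monomial `∏_{p ∈ S} Y_p` attached to a set `S` of node pairs. -/
def edgeMonomial (q : ℝ) (S : Finset (Pairs n)) (y : EdgeConf n) : ℝ :=
  ∏ p ∈ S, centered q (y p)

/-- The conditional expectation `E[g(Y*_p) | z]`. -/
def condMean (q lam : ℝ) (z : Lab n K) (p : Pairs n) (g : Bool → ℝ) : ℝ :=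
  pEdge n K q lam z p * g true + (1 - pEdge n K q lam z p) * g false

/-- The indicator that the two endpoints of `p` have the same label. -/
def sameLabel (z : Lab n K) (p : Pairs n) : ℝ := if z p.1.1 = z p.1.2 then 1 else 0

/-- The conditional second moment `E[Y_p² | z]`: it is `p̄` inside communities and `q̄` across. -/
def condSecondMoment (q lam : ℝ) (z : Lab n K) (p : Pairs n) : ℝ :=
  q * (1 - q) + lam * (1 - 2 * q) * sameLabel z p

/-- The average over the labels `z` of `1{z constant along the edges of R} ∏_{p ∈ C} E[Y_p² | z]`,
through which all the moments of edge monomials are expressed. -/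
def labelMoment (K : ℕ) (q lam : ℝ) (R C : Finset (Pairs n)) : ℝ :=
  𝔼 z : Lab n K, (∏ p ∈ R, sameLabel z p) * ∏ p ∈ C, condSecondMoment q lam z p

lemma sameLabel_nonneg (z : Lab n K) (p : Pairs n) : 0 ≤ sameLabel z p := by
  unfold sameLabel; split_ifs <;> norm_num

lemma sameLabel_le_one (z : Lab n K) (p : Pairs n) : sameLabel z p ≤ 1 := by
  unfold sameLabel; split_ifs <;> norm_num

lemma prod_sameLabel_ne_zero_iff {z : Lab n K} {S : Finset (Pairs n)} :
    ∏ p ∈ S, sameLabel z p ≠ 0 ↔ ∀ p ∈ S, z p.1.1 = z p.1.2 := by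
  simp [Finset.prod_ne_zero_iff, sameLabel]

lemma mul_one_sub_le_condSecondMoment (hlam : 0 ≤ lam) (hq : q ≤ 1 / 2) (z : Lab n K)
    (p : Pairs n) : q * (1 - q) ≤ condSecondMoment q lam z p :=
  le_add_of_nonneg_right
    (mul_nonneg (mul_nonneg hlam (by linarith)) (sameLabel_nonneg z p))

lemma mul_sameLabel_le_condSecondMoment (hq0 : 0 ≤ q) (hq1 : q ≤ 1) (hql : q + 2 * lam ≤ 1)
    (z : Lab n K) (p : Pairs n) : lam * sameLabel z p ≤ condSecondMoment q lam z p := by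
  unfold condSecondMoment sameLabel
  split_ifs
  · -- `q(1 - q) + λ(1 - 2q) - λ = q(1 - q - 2λ)`
    linarith [mul_nonneg hq0 (sub_nonneg.mpr hql)]
  · linarith [mul_nonneg hq0 (sub_nonneg.mpr hq1)]

lemma pEdge_eq (z : Lab n K) (p : Pairs n) :
    pEdge n K q lam z p = q + lam * sameLabel z p := by
  unfold pEdge sameLabel; split_ifs <;> simp

lemma condMean_centered (z : Lab n K) (p : Pairs n) :
    condMean q lam z p (centered q) = lam * sameLabel z p := by
  simp only [condMean, centered, pEdge_eq, if_true, Bool.false_eq_true, if_false]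
  ring

lemma condMean_centered_mul_self (z : Lab n K) (p : Pairs n) :
    condMean q lam z p (fun b => centered q b * centered q b) = condSecondMoment q lam z p := by
  simp only [condMean, centered, condSecondMoment, pEdge_eq, if_true, Bool.false_eq_true, if_false]
  ring

lemma condMean_one (z : Lab n K) (p : Pairs n) : condMean q lam z p (fun _ => 1) = 1 := by
  simp [condMean]

lemma expec_prod (n K : ℕ) (q lam : ℝ) (f : Pairs n → Bool → ℝ) :
    expec n K q lam (fun _ y => ∏ p, f p (y p)) =
      𝔼 z : Lab n K, ∏ p, condMean q lam z p (f p) := by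
  have hcond : ∀ (z : Lab n K) p, condMean q lam z p (f p) =
      ∑ b : Bool, (if b then pEdge n K q lam z p else 1 - pEdge n K q lam z p) * f p b := by
    simp [condMean]
  simp only [expec, wt, hcond, Fintype.expect_eq_sum_div_card, Finset.prod_univ_sum,
    Fintype.piFinset_univ, Finset.prod_mul_distrib, mul_assoc, ← Finset.mul_sum]
  simp [div_eq_inv_mul]

lemma expec_edgeMonomial_mul (S₁ S₂ : Finset (Pairs n)) :
    expec n K q lam (fun _ y => edgeMonomial q S₁ y * edgeMonomial q S₂ y) =
      lam ^ #(S₁ ∆ S₂) * labelMoment K q lam (S₁ ∆ S₂) (S₁ ∩ S₂) := by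
  let f : Pairs n → Bool → ℝ := fun p b =>
    (if p ∈ S₁ then centered q b else 1) * (if p ∈ S₂ then centered q b else 1)
  have prod_eq_prod_ite : ∀ (S : Finset (Pairs n)) (g : Pairs n → ℝ),
      ∏ p ∈ S, g p = ∏ p, if p ∈ S then g p else 1 := fun S g => by
    rw [Finset.prod_ite_mem, Finset.univ_inter]
  have hf : ∀ y : EdgeConf n, edgeMonomial q S₁ y * edgeMonomial q S₂ y = ∏ p, f p (y p) := by
    intro y
    simp only [edgeMonomial, prod_eq_prod_ite S₁, prod_eq_prod_ite S₂, f,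
      Finset.prod_mul_distrib]
  have hcond : ∀ (z : Lab n K) p, condMean q lam z p (f p) =
      (if p ∈ S₁ ∆ S₂ then lam * sameLabel z p else 1) *
        (if p ∈ S₁ ∩ S₂ then condSecondMoment q lam z p else 1) := by
    intro z p
    by_cases h₁ : p ∈ S₁ <;> by_cases h₂ : p ∈ S₂ <;>
      simp [f, h₁, h₂, Finset.mem_symmDiff, condMean_centered, condMean_centered_mul_self,
        condMean_one]
  simp only [hf, expec_prod, labelMoment, Finset.mul_expect]
  refine Finset.expect_congr rfl fun z _ => ?_
  simp only [hcond, Finset.prod_mul_distrib, ← prod_eq_prod_ite, Finset.prod_const, mul_assoc]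

lemma expec_edgeMonomial_sq (S : Finset (Pairs n)) :
    expec n K q lam (fun _ y => edgeMonomial q S y ^ 2) = labelMoment K q lam ∅ S := by
  simpa [sq] using expec_edgeMonomial_mul (K := K) (q := q) (lam := lam) S S

lemma labelMoment_nonneg (hlam : 0 ≤ lam) (hq0 : 0 ≤ q) (hq2 : q ≤ 1 / 2)
    (R C : Finset (Pairs n)) : 0 ≤ labelMoment K q lam R C :=
  Finset.expect_nonneg fun z _ => mul_nonneg
    (Finset.prod_nonneg fun p _ => sameLabel_nonneg z p)
    (Finset.prod_nonneg fun p _ => (mul_nonneg hq0 (by linarith)).trans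
      (mul_one_sub_le_condSecondMoment hlam hq2 z p))

lemma pow_mul_labelMoment_empty_le (hlam : 0 ≤ lam) (hq0 : 0 ≤ q) (hq2 : q ≤ 1 / 2)
    (S S' : Finset (Pairs n)) :
    (q * (1 - q)) ^ #(S \ S') * labelMoment K q lam ∅ (S ∩ S') ≤ labelMoment K q lam ∅ S := by
  simp only [labelMoment, Finset.mul_expect, Finset.prod_empty, one_mul]
  refine Finset.expect_le_expect fun z _ => ?_
  rw [← Finset.prod_const]
  exact prod_sdiff_mul_prod_inter_le_prod (fun _ => mul_nonneg hq0 (by linarith))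
    (mul_one_sub_le_condSecondMoment hlam hq2 z)

lemma pow_mul_labelMoment_sdiff_le (hlam : 0 ≤ lam) (hq0 : 0 ≤ q) (hq1 : q ≤ 1)
    (hql : q + 2 * lam ≤ 1) (S S' : Finset (Pairs n)) :
    lam ^ #(S \ S') * labelMoment K q lam (S \ S') (S ∩ S') ≤ labelMoment K q lam ∅ S := by
  simp only [labelMoment, Finset.mul_expect, Finset.prod_empty, one_mul]
  refine Finset.expect_le_expect fun z _ => ?_
  rw [← mul_assoc, ← Finset.prod_const, ← Finset.prod_mul_distrib]
  exact prod_sdiff_mul_prod_inter_le_prod (fun p => mul_nonneg hlam (sameLabel_nonneg z p))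
    (mul_sameLabel_le_condSecondMoment hq0 hq1 hql z)

end LabelAverages

section PinnedNodes

variable {n K : ℕ} {q lam : ℝ}

/-- No edge of `S` has an endpoint in `D`. -/
def Avoids (S : Finset (Pairs n)) (D : Finset (Fin n)) : Prop :=
  ∀ p ∈ S, p.1.1 ∉ D ∧ p.1.2 ∉ D

/-- The edges of `S` pin the nodes of `D`: a labeling with `K` labels that is constant along the
edges of `S` is determined by its values off `D`. -/
def Pins (K : ℕ) (S : Finset (Pairs n)) (D : Finset (Fin n)) : Prop :=
  Set.InjOn (Set.domRestrict (D : Set (Fin n))ᶜ) {z : Lab n K | ∀ p ∈ S, z p.1.1 = z p.1.2}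

lemma Avoids.mono {S S' : Finset (Pairs n)} {D : Finset (Fin n)} (hS : Avoids S D)
    (hsub : S' ⊆ S) : Avoids S' D :=
  fun p hp => hS p (hsub hp)

lemma Avoids.dependsOn_prod_sameLabel {S : Finset (Pairs n)} {D : Finset (Fin n)}
    (hS : Avoids S D) :
    DependsOn (fun z : Lab n K => ∏ p ∈ S, sameLabel z p) (D : Set (Fin n))ᶜ := fun z z' h =>
  Finset.prod_congr rfl fun p hp => by
    rw [sameLabel, sameLabel, h _ (hS p hp).1, h _ (hS p hp).2]

lemma Avoids.dependsOn_prod_condSecondMoment {S : Finset (Pairs n)} {D : Finset (Fin n)}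
    (hS : Avoids S D) :
    DependsOn (fun z : Lab n K => ∏ p ∈ S, condSecondMoment q lam z p) (D : Set (Fin n))ᶜ :=
  fun z z' h => Finset.prod_congr rfl fun p hp => by
    simp only [condSecondMoment, sameLabel, h _ (hS p hp).1, h _ (hS p hp).2]

lemma labelMoment_union_mul_pow_le (hlam : 0 ≤ lam) (hq0 : 0 ≤ q) (hq2 : q ≤ 1 / 2)
    {R R' C : Finset (Pairs n)} {D : Finset (Fin n)} (hdisj : Disjoint R R') (hpin : Pins K R D)
    (hR' : Avoids R' D) (hC : Avoids C D) :
    labelMoment K q lam (R ∪ R') C * (K : ℝ) ^ #D ≤ labelMoment K q lam R' C := by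
  have hmoment : ∀ (z : Lab n K) p, 0 ≤ condSecondMoment q lam z p := fun z p =>
    (mul_nonneg hq0 (by linarith)).trans (mul_one_sub_le_condSecondMoment hlam hq2 z p)
  have hcount := expect_mul_mul_card_pow_le_expect (D := D)
    (F := fun z : Lab n K => (∏ p ∈ R', sameLabel z p) * ∏ p ∈ C, condSecondMoment q lam z p)
    (B := fun z => ∏ p ∈ R, sameLabel z p)
    (fun z => mul_nonneg (Finset.prod_nonneg fun p _ => sameLabel_nonneg z p)
      (Finset.prod_nonneg fun p _ => hmoment z p))
    (fun z z' h => congrArg₂ (· * ·) (hR'.dependsOn_prod_sameLabel h)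
      (hC.dependsOn_prod_condSecondMoment h))
    (fun z => Finset.prod_le_one (fun p _ => sameLabel_nonneg z p) fun p _ => sameLabel_le_one z p)
    (hpin.mono fun z hz => prod_sameLabel_ne_zero_iff.mp hz)
  simpa only [labelMoment, Finset.prod_union hdisj, mul_assoc, Fintype.card_fin] using hcount

end PinnedNodes

section CorrelationOfMonomials

variable {n K : ℕ} {q lam : ℝ} {S₁ S₂ : Finset (Pairs n)} {D₁ D₂ : Finset (Fin n)}

lemma labelMoment_symmDiff_mul_pow_le_sdiff (hlam : 0 ≤ lam) (hq0 : 0 ≤ q) (hq2 : q ≤ 1 / 2)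
    (hpin : Pins K (S₁ \ S₂) D₁) (havoid : Avoids S₂ D₁) :
    labelMoment K q lam (S₁ ∆ S₂) (S₁ ∩ S₂) * (K : ℝ) ^ #D₁ ≤
      labelMoment K q lam (S₂ \ S₁) (S₂ ∩ S₁) := by
  rw [Finset.inter_comm S₂]
  exact labelMoment_union_mul_pow_le hlam hq0 hq2 disjoint_sdiff_sdiff hpin
    (havoid.mono Finset.sdiff_subset) (havoid.mono Finset.inter_subset_right)

lemma labelMoment_symmDiff_mul_pow_add_le (hlam : 0 ≤ lam) (hq0 : 0 ≤ q) (hq2 : q ≤ 1 / 2)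
    (hpin₁ : Pins K (S₁ \ S₂) D₁) (hpin₂ : Pins K (S₂ \ S₁) D₂) (havoid₁ : Avoids S₁ D₂)
    (havoid₂ : Avoids S₂ D₁) :
    labelMoment K q lam (S₁ ∆ S₂) (S₁ ∩ S₂) * (K : ℝ) ^ (#D₁ + #D₂) ≤
      labelMoment K q lam ∅ (S₁ ∩ S₂) := by
  have hsecond : labelMoment K q lam (S₂ \ S₁) (S₂ ∩ S₁) * (K : ℝ) ^ #D₂ ≤
      labelMoment K q lam ∅ (S₂ ∩ S₁) := by
    simpa only [Finset.union_empty] using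
      labelMoment_union_mul_pow_le hlam hq0 hq2 (Finset.disjoint_empty_right _) hpin₂
        (R' := ∅) (by simp [Avoids]) (havoid₁.mono Finset.inter_subset_right)
  calc labelMoment K q lam (S₁ ∆ S₂) (S₁ ∩ S₂) * (K : ℝ) ^ (#D₁ + #D₂)
      = labelMoment K q lam (S₁ ∆ S₂) (S₁ ∩ S₂) * (K : ℝ) ^ #D₁ * (K : ℝ) ^ #D₂ := by
        rw [pow_add, mul_assoc]
    _ ≤ labelMoment K q lam (S₂ \ S₁) (S₂ ∩ S₁) * (K : ℝ) ^ #D₂ := by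
        gcongr
        exact labelMoment_symmDiff_mul_pow_le_sdiff hlam hq0 hq2 hpin₁ havoid₂
    _ ≤ labelMoment K q lam ∅ (S₁ ∩ S₂) := Finset.inter_comm S₁ S₂ ▸ hsecond

lemma sq_expec_edgeMonomial_mul_le_of_qbar (hK : 0 < K) (hlam : 0 ≤ lam) (hq0 : 0 < q)
    (hq2 : q ≤ 1 / 2) (hpin₁ : Pins K (S₁ \ S₂) D₁) (hpin₂ : Pins K (S₂ \ S₁) D₂)
    (havoid₁ : Avoids S₁ D₂) (havoid₂ : Avoids S₂ D₁) :
    expec n K q lam (fun _ y => edgeMonomial q S₁ y * edgeMonomial q S₂ y) ^ 2 ≤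
      (((K : ℝ) ^ (#D₁ + #D₂))⁻¹ * (lam / √(q * (1 - q))) ^ #(S₁ ∆ S₂)) ^ 2 *
        (expec n K q lam (fun _ y => edgeMonomial q S₁ y ^ 2) *
          expec n K q lam (fun _ y => edgeMonomial q S₂ y ^ 2)) := by
  rw [expec_edgeMonomial_mul, expec_edgeMonomial_sq, expec_edgeMonomial_sq]
  set X := labelMoment K q lam (S₁ ∆ S₂) (S₁ ∩ S₂)
  set Z := labelMoment K q lam ∅ (S₁ ∩ S₂) with hZ_def
  have hX : 0 ≤ X := labelMoment_nonneg hlam hq0.le hq2 _ _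
  have hZ : 0 ≤ Z := labelMoment_nonneg hlam hq0.le hq2 _ _
  have hS₁ : 0 ≤ labelMoment K q lam ∅ S₁ := labelMoment_nonneg hlam hq0.le hq2 _ _
  have hqbar : 0 < q * (1 - q) := mul_pos hq0 (by linarith)
  have hXZ : X * (K : ℝ) ^ (#D₁ + #D₂) ≤ Z :=
    labelMoment_symmDiff_mul_pow_add_le hlam hq0.le hq2 hpin₁ hpin₂ havoid₁ havoid₂
  have hsecond₁ : (q * (1 - q)) ^ #(S₁ \ S₂) * Z ≤ labelMoment K q lam ∅ S₁ :=
    pow_mul_labelMoment_empty_le hlam hq0.le hq2 S₁ S₂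
  have hsecond₂ : (q * (1 - q)) ^ #(S₂ \ S₁) * Z ≤ labelMoment K q lam ∅ S₂ := by
    simpa only [hZ_def, Finset.inter_comm S₁] using
      pow_mul_labelMoment_empty_le hlam hq0.le hq2 S₂ S₁
  have hroot : (√(q * (1 - q)) ^ #(S₁ ∆ S₂)) ^ 2 =
      (q * (1 - q)) ^ #(S₁ \ S₂) * (q * (1 - q)) ^ #(S₂ \ S₁) := by
    rw [pow_right_comm, Real.sq_sqrt hqbar.le, card_symmDiff_eq, pow_add]
  calc (lam ^ #(S₁ ∆ S₂) * X) ^ 2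
      ≤ (lam ^ #(S₁ ∆ S₂) * (Z / (K : ℝ) ^ (#D₁ + #D₂))) ^ 2 := by
        gcongr
        rwa [le_div_iff₀ (by positivity)]
    _ = (((K : ℝ) ^ (#D₁ + #D₂))⁻¹ * (lam / √(q * (1 - q))) ^ #(S₁ ∆ S₂)) ^ 2 *
          ((√(q * (1 - q)) ^ #(S₁ ∆ S₂)) ^ 2 * Z ^ 2) := by
        rw [div_pow]
        field_simp
    _ = (((K : ℝ) ^ (#D₁ + #D₂))⁻¹ * (lam / √(q * (1 - q))) ^ #(S₁ ∆ S₂)) ^ 2 *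
          (((q * (1 - q)) ^ #(S₁ \ S₂) * Z) * ((q * (1 - q)) ^ #(S₂ \ S₁) * Z)) := by
        rw [hroot]
        ring
    _ ≤ _ := by gcongr

lemma sq_expec_edgeMonomial_mul_le_of_lam (hK : 0 < K) (hlam : 0 ≤ lam) (hq0 : 0 ≤ q)
    (hq2 : q ≤ 1 / 2) (hql : q + 2 * lam ≤ 1) (hpin₁ : Pins K (S₁ \ S₂) D₁)
    (hpin₂ : Pins K (S₂ \ S₁) D₂) (havoid₁ : Avoids S₁ D₂) (havoid₂ : Avoids S₂ D₁) :
    expec n K q lam (fun _ y => edgeMonomial q S₁ y * edgeMonomial q S₂ y) ^ 2 ≤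
      (√lam ^ #(S₁ ∆ S₂) / √K ^ (#D₁ + #D₂)) ^ 2 *
        (expec n K q lam (fun _ y => edgeMonomial q S₁ y ^ 2) *
          expec n K q lam (fun _ y => edgeMonomial q S₂ y ^ 2)) := by
  rw [expec_edgeMonomial_mul, expec_edgeMonomial_sq, expec_edgeMonomial_sq]
  set X := labelMoment K q lam (S₁ ∆ S₂) (S₁ ∩ S₂) with hX_def
  set X₁ := labelMoment K q lam (S₁ \ S₂) (S₁ ∩ S₂)
  set X₂ := labelMoment K q lam (S₂ \ S₁) (S₂ ∩ S₁)
  have hq1 : q ≤ 1 := by linarith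
  have hX : 0 ≤ X := labelMoment_nonneg hlam hq0 hq2 _ _
  have hS₁ : 0 ≤ labelMoment K q lam ∅ S₁ := labelMoment_nonneg hlam hq0 hq2 _ _
  have hX₁ : 0 ≤ X₁ := labelMoment_nonneg hlam hq0 hq2 _ _
  have hX₂ : 0 ≤ X₂ := labelMoment_nonneg hlam hq0 hq2 _ _
  have hXX₂ : X * (K : ℝ) ^ #D₁ ≤ X₂ :=
    labelMoment_symmDiff_mul_pow_le_sdiff hlam hq0 hq2 hpin₁ havoid₂
  have hXX₁ : X * (K : ℝ) ^ #D₂ ≤ X₁ := by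
    rw [hX_def, symmDiff_comm, Finset.inter_comm]
    exact labelMoment_symmDiff_mul_pow_le_sdiff hlam hq0 hq2 hpin₂ havoid₁
  have hsecond₁ : lam ^ #(S₁ \ S₂) * X₁ ≤ labelMoment K q lam ∅ S₁ :=
    pow_mul_labelMoment_sdiff_le hlam hq0 hq1 hql S₁ S₂
  have hsecond₂ : lam ^ #(S₂ \ S₁) * X₂ ≤ labelMoment K q lam ∅ S₂ :=
    pow_mul_labelMoment_sdiff_le hlam hq0 hq1 hql S₂ S₁
  have hcoeff : (√lam ^ #(S₁ ∆ S₂) / √K ^ (#D₁ + #D₂)) ^ 2 =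
      lam ^ #(S₁ ∆ S₂) / ((K : ℝ) ^ #D₂ * (K : ℝ) ^ #D₁) := by
    rw [div_pow, pow_right_comm, pow_right_comm √(K : ℝ), Real.sq_sqrt hlam,
      Real.sq_sqrt (Nat.cast_nonneg K), add_comm, pow_add]
  rw [hcoeff]
  calc (lam ^ #(S₁ ∆ S₂) * X) ^ 2
      = lam ^ #(S₁ ∆ S₂) / ((K : ℝ) ^ #D₂ * (K : ℝ) ^ #D₁) *
          ((lam ^ #(S₁ \ S₂) * (X * (K : ℝ) ^ #D₂)) *
            (lam ^ #(S₂ \ S₁) * (X * (K : ℝ) ^ #D₁))) := by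
        rw [card_symmDiff_eq, pow_add]
        field_simp
    _ ≤ lam ^ #(S₁ ∆ S₂) / ((K : ℝ) ^ #D₂ * (K : ℝ) ^ #D₁) *
          ((lam ^ #(S₁ \ S₂) * X₁) * (lam ^ #(S₂ \ S₁) * X₂)) := by gcongr
    _ ≤ _ := by gcongr

theorem abs_correlation_edgeMonomial_le (hK : 0 < K) (hlam : 0 ≤ lam) (hq0 : 0 < q)
    (hq2 : q ≤ 1 / 2) (hql : q + 2 * lam ≤ 1) (hpin₁ : Pins K (S₁ \ S₂) D₁)
    (hpin₂ : Pins K (S₂ \ S₁) D₂) (havoid₁ : Avoids S₁ D₂) (havoid₂ : Avoids S₂ D₁) :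
    |expec n K q lam (fun _ y => edgeMonomial q S₁ y * edgeMonomial q S₂ y) /
        √(expec n K q lam (fun _ y => edgeMonomial q S₁ y ^ 2) *
          expec n K q lam (fun _ y => edgeMonomial q S₂ y ^ 2))| ≤
      min (((K : ℝ) ^ (#D₁ + #D₂))⁻¹ * (lam / √(q * (1 - q))) ^ #(S₁ ∆ S₂))
        (√lam ^ #(S₁ ∆ S₂) / √K ^ (#D₁ + #D₂)) :=
  le_min
    (abs_div_sqrt_le (by positivity)
      (sq_expec_edgeMonomial_mul_le_of_qbar hK hlam hq0 hq2 hpin₁ hpin₂ havoid₁ havoid₂))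
    (abs_div_sqrt_le (by positivity)
      (sq_expec_edgeMonomial_mul_le_of_lam hK hlam hq0.le hq2 hql hpin₁ hpin₂ havoid₁ havoid₂))

end CorrelationOfMonomials

section LabeledTemplates

variable {n : ℕ} {T T' : Template} {π : Fin T.v ↪ Fin n} {π' : Fin T'.v ↪ Fin n}

/-- The unordered pair of two distinct nodes, as an element of `Pairs n`. -/
def mkPair {i j : Fin n} (h : i ≠ j) : Pairs n := ⟨(min i j, max i j), min_lt_max.mpr h⟩

lemma sym2_mkPair {i j : Fin n} (h : i ≠ j) :
    s((mkPair h).1.1, (mkPair h).1.2) = s(i, j) := by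
  rcases le_total i j with hij | hij <;> simp [mkPair, hij, Sym2.eq_swap]

lemma sym2_injective : Function.Injective fun p : Pairs n => s(p.1.1, p.1.2) := by
  rintro ⟨⟨i, j⟩, hij⟩ ⟨⟨k, l⟩, hkl⟩ h
  rcases Sym2.eq_iff.mp h with ⟨rfl, rfl⟩ | ⟨rfl, rfl⟩
  · rfl
  · exact absurd hij hkl.not_gt

/-- The node pair onto which the labeling `π` maps an edge of the template. -/
def labeledEdge (T : Template) (π : Fin T.v ↪ Fin n) : T.E ↪ Pairs n where
  toFun e := mkPair (π.injective.ne (T.hE e e.2).ne)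
  inj' e e' h := by
    have hsym := congrArg (fun p : Pairs n => s(p.1.1, p.1.2)) h
    simp only [sym2_mkPair, Sym2.eq_iff, π.injective.eq_iff] at hsym
    rcases hsym with ⟨h₁, h₂⟩ | ⟨h₁, h₂⟩
    · exact Subtype.ext (Prod.ext h₁ h₂)
    · have hlt := T.hE e e.2
      rw [h₁, h₂] at hlt
      exact absurd hlt (T.hE e' e'.2).not_gt

lemma sym2_labeledEdge (e : T.E) :
    s((labeledEdge T π e).1.1, (labeledEdge T π e).1.2) = s(π e.1.1, π e.1.2) :=
  sym2_mkPair (π.injective.ne (T.hE e e.2).ne)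

/-- The edge set of the labeled graph `G[π]`. -/
def labeledEdges (T : Template) (π : Fin T.v ↪ Fin n) : Finset (Pairs n) :=
  univ.map (labeledEdge T π)

/-- The set `U` of labels used by `π` and not by `π'`. -/
def privateNodes {m m' : ℕ} (π : Fin m ↪ Fin n) (π' : Fin m' ↪ Fin n) : Finset (Fin n) :=
  univ.map π \ univ.map π'

lemma mem_labeledEdges {p : Pairs n} :
    p ∈ labeledEdges T π ↔ ∃ e ∈ T.E, s(π e.1, π e.2) = s(p.1.1, p.1.2) := by
  simp only [labeledEdges, Finset.mem_map, Finset.mem_univ, true_and, Subtype.exists]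
  refine exists_congr fun e => ⟨?_, fun ⟨he, h⟩ => ⟨he, ?_⟩⟩
  · rintro ⟨he, rfl⟩
    exact ⟨he, (sym2_labeledEdge ⟨e, he⟩).symm⟩
  · exact sym2_injective ((sym2_labeledEdge ⟨e, he⟩).trans h)

lemma PG_eq_edgeMonomial (q : ℝ) (T : Template) (π : Fin T.v ↪ Fin n) (y : EdgeConf n) :
    PG n q T π y = edgeMonomial q (labeledEdges T π) y := by
  rw [PG, edgeMonomial, labeledEdges, Finset.prod_map, ← Finset.prod_coe_sort]
  refine Finset.prod_congr rfl fun e _ => ?_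
  rw [Ymat, dif_neg (π.injective.ne (T.hE e e.2).ne)]
  rfl

lemma card_labeledEdges_sdiff :
    #(labeledEdges T π \ labeledEdges T' π') =
      #{e ∈ T.E | ¬ ∃ e' ∈ T'.E, s(π' e'.1, π' e'.2) = s(π e.1, π e.2)} := by
  rw [labeledEdges, ← Finset.filter_notMem_eq_sdiff, Finset.filter_map, Finset.card_map,
    ← Finset.card_map (Function.Embedding.subtype (· ∈ T.E))]
  congr 1
  ext e
  simp only [Finset.mem_map, Finset.mem_filter, Finset.mem_univ, true_and, Function.comp_apply,
    mem_labeledEdges, sym2_labeledEdge, Function.Embedding.subtype_apply, Subtype.exists,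
    exists_and_right, exists_prop, exists_eq_right]

lemma card_privateNodes {m m' : ℕ} (π : Fin m ↪ Fin n) (π' : Fin m' ↪ Fin n) :
    #(privateNodes π π') = #{a | ∀ b, π a ≠ π' b} := by
  rw [privateNodes, ← Finset.filter_notMem_eq_sdiff, Finset.filter_map, Finset.card_map]
  simp [eq_comm]

lemma avoids_labeledEdges_privateNodes : Avoids (labeledEdges T' π') (privateNodes π π') := by
  have hused : ∀ b, π' b ∉ privateNodes π π' := by simp [privateNodes]
  intro p hp
  obtain ⟨e, -, he⟩ := mem_labeledEdges.mp hp
  rcases Sym2.eq_iff.mp he with ⟨h₁, h₂⟩ | ⟨h₁, h₂⟩ <;> rw [← h₁, ← h₂] <;>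
    exact ⟨hused _, hused _⟩

lemma eq_of_eqOn_of_reachable {V α : Type*} {G : SimpleGraph V} {s : Set V} {f g : V → α}
    (hs : Set.EqOn f g s) (hf : ∀ a b, G.Adj a b → a ∉ s → f a = f b)
    (hg : ∀ a b, G.Adj a b → a ∉ s → g a = g b) (hreach : ∀ w, ∃ a ∈ s, G.Reachable w a) :
    f = g := by
  funext w
  obtain ⟨a, ha, ⟨walk⟩⟩ := hreach w
  induction walk with
  | nil => exact hs ha
  | @cons u v _ hadj _ ih =>
    by_cases hu : u ∈ s
    · exact hs hu
    · rw [hf u v hadj hu, hg u v hadj hu, ih ha]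

lemma apply_eq_of_adj_of_private {α : Type*} {z : Fin n → α}
    (hz : ∀ p ∈ labeledEdges T π \ labeledEdges T' π', z p.1.1 = z p.1.2) {a c : Fin T.v}
    (hadj : T.graph.Adj a c) (ha : ∀ b, π a ≠ π' b) : z (π a) = z (π c) := by
  have hne : π a ≠ π c := π.injective.ne hadj.ne
  have hmem : mkPair hne ∈ labeledEdges T π := by
    rw [mem_labeledEdges, sym2_mkPair]
    rcases ((SimpleGraph.fromRel_adj _ _ _).mp hadj).2 with he | he
    · exact ⟨_, he, rfl⟩
    · exact ⟨_, he, Sym2.eq_swap⟩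
  have hnotMem : mkPair hne ∉ labeledEdges T' π' := by
    rw [mem_labeledEdges, sym2_mkPair]
    rintro ⟨e, -, he⟩
    rcases Sym2.eq_iff.mp he with ⟨h, -⟩ | ⟨-, h⟩ <;> exact ha _ h.symm
  have hconst := hz _ (Finset.mem_sdiff.mpr ⟨hmem, hnotMem⟩)
  rcases Sym2.eq_iff.mp (sym2_mkPair hne) with ⟨h₁, h₂⟩ | ⟨h₁, h₂⟩ <;> rw [h₁, h₂] at hconst
  exacts [hconst, hconst.symm]

lemma pins_sdiff_privateNodes (K : ℕ)
    (hreach : ∀ w, ∃ a, (∃ b, π a = π' b) ∧ T.graph.Reachable w a) :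
    Pins K (labeledEdges T π \ labeledEdges T' π') (privateNodes π π') := by
  intro z hz z' hz' hrestrict
  have hoff : ∀ i ∉ privateNodes π π', z i = z' i := fun i hi => congrFun hrestrict ⟨i, hi⟩
  have hcomp : z ∘ π = z' ∘ π := by
    refine eq_of_eqOn_of_reachable (s := {a | ∃ b, π a = π' b}) ?_
      (fun a c hadj ha => apply_eq_of_adj_of_private hz hadj (not_exists.mp ha))
      (fun a c hadj ha => apply_eq_of_adj_of_private hz' hadj (not_exists.mp ha)) hreach
    rintro a ⟨b, hab⟩
    exact hoff _ (by simp [privateNodes, hab])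
  funext i
  by_cases hi : i ∈ privateNodes π π'
  · obtain ⟨a, -, rfl⟩ := Finset.mem_map.mp (Finset.mem_sdiff.mp hi).1
    exact congrFun hcomp a
  · exact hoff i hi

end LabeledTemplates

section Matchings

variable {n : ℕ} {T1 T2 : Template} {M : Finset (Fin T1.v × Fin T2.v)}
  {π1 : Fin T1.v ↪ Fin n} {π2 : Fin T2.v ↪ Fin n}

lemma edgeMatched1_iff (hM : ∀ a b, π1 a = π2 b ↔ (a, b) ∈ M) (e : Fin T1.v × Fin T1.v) :
    EdgeMatched1 T1 T2 M e ↔ ∃ e' ∈ T2.E, s(π2 e'.1, π2 e'.2) = s(π1 e.1, π1 e.2) := by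
  simp only [EdgeMatched1, ← hM, eq_comm (b := s(π1 e.1, π1 e.2)), Sym2.eq_iff]

lemma edgeMatched2_iff (hM : ∀ a b, π1 a = π2 b ↔ (a, b) ∈ M) (e' : Fin T2.v × Fin T2.v) :
    EdgeMatched2 T1 T2 M e' ↔ ∃ e ∈ T1.E, s(π1 e.1, π1 e.2) = s(π2 e'.1, π2 e'.2) := by
  simp only [EdgeMatched2, ← hM, Sym2.eq_iff, and_comm (a := π1 _ = π2 e'.2)]

lemma EDeltaCard_eq_card_symmDiff (hM : ∀ a b, π1 a = π2 b ↔ (a, b) ∈ M) :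
    EDeltaCard T1 T2 M = #(labeledEdges T1 π1 ∆ labeledEdges T2 π2) := by
  simp only [EDeltaCard, card_symmDiff_eq, card_labeledEdges_sdiff, edgeMatched1_iff hM,
    edgeMatched2_iff hM]

lemma U1card_eq_card_privateNodes (hM : ∀ a b, π1 a = π2 b ↔ (a, b) ∈ M) :
    U1card T1 T2 M = #(privateNodes π1 π2) := by
  rw [U1card, card_privateNodes]
  refine congrArg Finset.card (Finset.filter_congr fun a _ => ?_)
  simp only [ne_eq, hM]
  exact ⟨fun h b hb => h _ hb rfl, fun h p hp hpa => h p.2 (hpa ▸ hp)⟩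

lemma U2card_eq_card_privateNodes (hM : ∀ a b, π1 a = π2 b ↔ (a, b) ∈ M) :
    U2card T1 T2 M = #(privateNodes π2 π1) := by
  rw [U2card, card_privateNodes]
  refine congrArg Finset.card (Finset.filter_congr fun b _ => ?_)
  simp only [ne_eq, eq_comm (a := π2 _), hM]
  exact ⟨fun h a ha => h _ ha rfl, fun h p hp hpb => h p.1 (hpb ▸ hp)⟩

end Matchings

theorem statement7_general {n K : ℕ} {q lam : ℝ} (hK : 0 < K) (hq2 : q ≤ 1 / 2)
    (hql : q + 2 * lam ≤ 1) (hlam : 0 ≤ lam) (hq0 : 0 < q) {T1 T2 : Template}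
    {M : Finset (Fin T1.v × Fin T2.v)} {π1 : Fin T1.v ↪ Fin n} {π2 : Fin T2.v ↪ Fin n}
    (hM : ∀ a b, π1 a = π2 b ↔ (a, b) ∈ M)
    (hreach1 : ∀ w, ∃ p ∈ M, T1.graph.Reachable w p.1)
    (hreach2 : ∀ w, ∃ p ∈ M, T2.graph.Reachable w p.2) :
    |expec n K q lam (fun _ y => PG n q T1 π1 y * PG n q T2 π2 y) /
        √(expec n K q lam (fun _ y => PG n q T1 π1 y ^ 2) *
          expec n K q lam (fun _ y => PG n q T2 π2 y ^ 2))| ≤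
      min ((K : ℝ) ^ (-((U1card T1 T2 M + U2card T1 T2 M : ℕ) : ℝ)) *
            (lam / √(q * (1 - q))) ^ EDeltaCard T1 T2 M)
        (lam ^ ((EDeltaCard T1 T2 M : ℝ) / 2) /
          (K : ℝ) ^ (((U1card T1 T2 M + U2card T1 T2 M : ℕ) : ℝ) / 2)) := by
  have hpin1 : Pins K (labeledEdges T1 π1 \ labeledEdges T2 π2) (privateNodes π1 π2) :=
    pins_sdiff_privateNodes K fun w =>
      let ⟨p, hp, hwp⟩ := hreach1 w
      ⟨p.1, ⟨p.2, (hM _ _).mpr hp⟩, hwp⟩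
  have hpin2 : Pins K (labeledEdges T2 π2 \ labeledEdges T1 π1) (privateNodes π2 π1) :=
    pins_sdiff_privateNodes K fun w =>
      let ⟨p, hp, hwp⟩ := hreach2 w
      ⟨p.2, ⟨p.1, ((hM _ _).mpr hp).symm⟩, hwp⟩
  rw [EDeltaCard_eq_card_symmDiff hM, U1card_eq_card_privateNodes hM,
    U2card_eq_card_privateNodes hM, Real.rpow_neg K.cast_nonneg,
    Real.rpow_div_two_eq_sqrt _ hlam, Real.rpow_div_two_eq_sqrt _ K.cast_nonneg]
  simp only [Real.rpow_natCast, PG_eq_edgeMonomial]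
  exact abs_correlation_edgeMonomial_le hK hlam hq0 hq2 hql hpin1 hpin2
    avoids_labeledEdges_privateNodes avoids_labeledEdges_privateNodes

theorem statement7 (n K : ℕ) (q lam : ℝ) (hn : 2 ≤ n) (hK : 2 ≤ K) (hKn : K ≤ n)
    (hq2 : q ≤ 1 / 2) (hql : q + 2 * lam ≤ 1) (hlam : 0 < lam) (hq0 : 0 < q)
    (T1 T2 : Template) (M : Finset (Fin T1.v × Fin T2.v))
    (hM : IsMatching T1 T2 M) (hMstar : InMstar T1 T2 M)
    (π1 : Fin T1.v ↪ Fin n) (π2 : Fin T2.v ↪ Fin n)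
    (hπ : (π1, π2) ∈ PiM n hn T1 T2 M) :
    |expec n K q lam (fun _ y => PG n q T1 π1 y * PG n q T2 π2 y) /
        Real.sqrt (expec n K q lam (fun _ y => PG n q T1 π1 y ^ 2) *
          expec n K q lam (fun _ y => PG n q T2 π2 y ^ 2))| ≤
      min ((K : ℝ) ^ (-((U1card T1 T2 M + U2card T1 T2 M : ℕ) : ℝ)) *
            (lam / Real.sqrt (q * (1 - q))) ^ EDeltaCard T1 T2 M)
        (lam ^ ((EDeltaCard T1 T2 M : ℝ) / 2) /
          (K : ℝ) ^ (((U1card T1 T2 M + U2card T1 T2 M : ℕ) : ℝ) / 2)) :=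
  statement7_general (by omega) hq2 hql hlam.le hq0 hπ.2.2
    (fun w => (hMstar.1 w).imp fun _ hp => ⟨Finset.mem_of_mem_filter _ hp.1, hp.2⟩)
    (fun w => (hMstar.2 w).imp fun _ hp => ⟨Finset.mem_of_mem_filter _ hp.1, hp.2⟩)

end SBM
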